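/- Let u, w ∈ ℝ⁴ be linearly independent. Then Σ_{0≤a<b≤3} (det J_ab(u,w))² / √(⟨u,u⟩⟨w,w⟩ − ⟨u,w⟩²) = √(⟨u,u⟩⟨w,w⟩ − ⟨u,w⟩²). Consequently, for a continuously differentiable parametrization σ : [0,1]² → ℝ⁴ with linearly independent partial derivatives σ', σ̇ at every point, ∫_{[0,1]²} Σ_{0≤a<b≤3} ρ_σ^{ab}(s,t) |J_ab^σ|(s,t) ds dt = ∫_{[0,1]²} √(⟨σ',σ'⟩⟨σ̇,σ̇⟩ − ⟨σ',σ̇⟩²) ds dt, which is the area of the surface parametrized by σ. -/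

import Mathlib

/-!
The sum of squared `2 × 2` minors of the `4 × 2` matrix with columns `u`, `w` is its Gram
determinant, by Lagrange's identity (the Cauchy–Binet formula). The first claim is therefore
`x / √x = √x` for the Gram determinant `x`. It holds pointwise, so the two integrands coincide as
functions and the integrals agree.
-/

open MeasureTheory

/-- Euclidean inner product on `ℝ⁴`. -/
noncomputable def euclid4 (u w : Fin 4 → ℝ) : ℝ := ∑ i, u i * w i

/-- `Σ_{0 ≤ a < b ≤ 3} (det J_ab(u,w))²`, the sum of squared `2 × 2` minors. -/
noncomputable def minorSq (u w : Fin 4 → ℝ) : ℝ :=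
  ∑ p ∈ Finset.univ.filter (fun p : Fin 4 × Fin 4 => p.1 < p.2),
    (u p.1 * w p.2 - u p.2 * w p.1) ^ 2

/-- Lagrange's identity in `ℝ⁴`. -/
theorem minorSq_eq_gram (u w : Fin 4 → ℝ) :
    minorSq u w = euclid4 u u * euclid4 w w - euclid4 u w ^ 2 := by
  simp only [minorSq, euclid4, Finset.sum_filter, Fintype.sum_prod_type, Fin.sum_univ_four]
  simp [Fin.lt_def]
  ring

/-- for linearly independent `u, w ∈ ℝ⁴`,
`Σ_{a<b} (det J_ab)²/√(⟨u,u⟩⟨w,w⟩ − ⟨u,w⟩²) = √(⟨u,u⟩⟨w,w⟩ − ⟨u,w⟩²)`; consequently for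
a `C¹` parametrization with everywhere linearly independent partials, `∫_{I²} Σ ρ^{ab}|J_ab|`
equals the usual area integral `∫_{I²} √(⟨σ',σ'⟩⟨σ̇,σ̇⟩ − ⟨σ',σ̇⟩²)`. -/
theorem density_integral_is_area
    (σ σs σt : ℝ → ℝ → (Fin 4 → ℝ))
    (hs : ∀ s t : ℝ, HasDerivAt (fun x => σ x t) (σs s t) s)
    (ht : ∀ s t : ℝ, HasDerivAt (fun y => σ s y) (σt s t) t)
    (hcs : Continuous fun p : ℝ × ℝ => σs p.1 p.2)
    (hct : Continuous fun p : ℝ × ℝ => σt p.1 p.2)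
    (hli : ∀ s t : ℝ, LinearIndependent ℝ ![σs s t, σt s t]) :
    (∀ u w : Fin 4 → ℝ, LinearIndependent ℝ ![u, w] →
        minorSq u w / Real.sqrt (euclid4 u u * euclid4 w w - euclid4 u w ^ 2)
          = Real.sqrt (euclid4 u u * euclid4 w w - euclid4 u w ^ 2)) ∧
    ∫ p in Set.Icc (0:ℝ) 1 ×ˢ Set.Icc (0:ℝ) 1,
        minorSq (σs p.1 p.2) (σt p.1 p.2)
          / Real.sqrt (euclid4 (σs p.1 p.2) (σs p.1 p.2) * euclid4 (σt p.1 p.2) (σt p.1 p.2)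
              - euclid4 (σs p.1 p.2) (σt p.1 p.2) ^ 2)
      = ∫ p in Set.Icc (0:ℝ) 1 ×ˢ Set.Icc (0:ℝ) 1,
          Real.sqrt (euclid4 (σs p.1 p.2) (σs p.1 p.2) * euclid4 (σt p.1 p.2) (σt p.1 p.2)
            - euclid4 (σs p.1 p.2) (σt p.1 p.2) ^ 2) := by
  -- `Real.div_sqrt` also covers a vanishing Gram determinant, by the convention `0 / 0 = 0`.
  have key : ∀ u w : Fin 4 → ℝ,
      minorSq u w / Real.sqrt (euclid4 u u * euclid4 w w - euclid4 u w ^ 2)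
        = Real.sqrt (euclid4 u u * euclid4 w w - euclid4 u w ^ 2) := fun u w => by
    rw [minorSq_eq_gram, Real.div_sqrt]
  exact ⟨fun u w _ => key u w, by simp only [key]⟩
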